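/- arXiv:2209.00242 — 2 statements merged into one kernel-verified Lean document; each statement's English description precedes it below -/
import Mathlib

section
/- Let ε > 0, 1 < p < ∞, let b : [0,∞)×𝕋ⁿ → ℝⁿ be smooth on the torus 𝕋ⁿ, let Θ be a smooth strictly positive solution of Θ_t + div(bΘ) = ε ΔΘ with Θ(0,x) = 1, and let v be a smooth nowhere-vanishing solution of v_t + div(bv) = ε Δv with v(0,·) = v_0. Then for all t ≥ 0: ∫_{𝕋ⁿ} |v(t,x)|^p / Θ(t,x)^{p−1} dx + ε (4(p−1)/p) ∫_0^t ∫_{𝕋ⁿ} Θ |∇(|v|^{p/2}/Θ^{p/2})|² dx dτ = ∫_{𝕋ⁿ} |v_0(x)|^p dx. -/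
/-!
Write `L u = ε Δu - div(b u) = div(ε ∇u - b u)`, whose integral over the torus vanishes. Since
`v` and `Θ` both solve `∂ₜ u = L u`, the relative entropy density `Θ η(v / Θ)` solves the same
equation up to the defect of the chain rule for `L`: with `q = v / Θ`,
`∂ₜ (Θ η(q)) = η'(q) L v + (η(q) - q η'(q)) L Θ = L (Θ η(q)) - ε Θ η''(q) |∇q|²`.
Integrating over the torus and in time gives an entropy balance for every `η` that is `C²` near the
values of `q`; the choice `η(s) = |s|^p`, smooth away from `0`, satisfies
`η''(q) |∇q|² = (4 (p - 1) / p) |∇ |q|^(p/2)|²`.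
-/

open MeasureTheory

/-- Partial derivative in the `i`-th coordinate direction. -/
noncomputable def pderiv₁₂ {n : ℕ} (i : Fin n) (g : (Fin n → ℝ) → ℝ) (x : Fin n → ℝ) : ℝ :=
  fderiv ℝ g x (Pi.single i 1)

/-- A function on `ℝⁿ` representing a function on the torus `𝕋ⁿ = [0,1]ⁿ`:
it is periodic with respect to the lattice `ℤⁿ`. -/
def TorusFun₁₂ {n : ℕ} (g : (Fin n → ℝ) → ℝ) : Prop :=
  ∀ (x : Fin n → ℝ) (k : Fin n → ℤ), g (x + fun i => (k i : ℝ)) = g x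

open Set Function

section PartialDerivative

variable {n : ℕ} {f g : (Fin n → ℝ) → ℝ} {x : Fin n → ℝ} (i : Fin n)

lemma pderiv₁₂_add (hf : DifferentiableAt ℝ f x) (hg : DifferentiableAt ℝ g x) :
    pderiv₁₂ i (fun y => f y + g y) x = pderiv₁₂ i f x + pderiv₁₂ i g x := by
  simp [pderiv₁₂, fderiv_fun_add hf hg]

lemma pderiv₁₂_sub (hf : DifferentiableAt ℝ f x) (hg : DifferentiableAt ℝ g x) :
    pderiv₁₂ i (fun y => f y - g y) x = pderiv₁₂ i f x - pderiv₁₂ i g x := by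
  simp [pderiv₁₂, fderiv_fun_sub hf hg]

lemma pderiv₁₂_const_mul (c : ℝ) (hf : DifferentiableAt ℝ f x) :
    pderiv₁₂ i (fun y => c * f y) x = c * pderiv₁₂ i f x := by
  simp [pderiv₁₂, fderiv_const_mul hf]

lemma pderiv₁₂_mul (hf : DifferentiableAt ℝ f x) (hg : DifferentiableAt ℝ g x) :
    pderiv₁₂ i (fun y => f y * g y) x = pderiv₁₂ i f x * g x + f x * pderiv₁₂ i g x := by
  simp [pderiv₁₂, fderiv_fun_mul hf hg, add_comm, mul_comm]

lemma pderiv₁₂_comp {η : ℝ → ℝ} (hη : DifferentiableAt ℝ η (f x)) (hf : DifferentiableAt ℝ f x) :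
    pderiv₁₂ i (fun y => η (f y)) x = deriv η (f x) * pderiv₁₂ i f x := by
  have h := (hη.hasDerivAt.comp_hasFDerivAt x hf.hasFDerivAt).fderiv
  simp only [comp_def] at h
  simp [pderiv₁₂, h]

lemma contDiff_pderiv₁₂ {m k : WithTop ℕ∞} (hf : ContDiff ℝ k f) (hmk : m + 1 ≤ k) :
    ContDiff ℝ m (pderiv₁₂ i f) :=
  (hf.fderiv_right hmk).clm_apply contDiff_const

lemma TorusFun₁₂.pderiv₁₂ (hf : TorusFun₁₂ f) : TorusFun₁₂ (pderiv₁₂ i f) := by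
  intro x k
  have hshift : (fun y => f (y + fun j => (k j : ℝ))) = f := funext fun y => hf y k
  simp only [_root_.pderiv₁₂, ← fderiv_comp_add_right, hshift]

lemma TorusFun₁₂.insertNth_zero_eq_insertNth_one {m : ℕ} {f : (Fin (m + 1) → ℝ) → ℝ}
    (hf : TorusFun₁₂ f) (i : Fin (m + 1)) (y : Fin m → ℝ) :
    f (i.insertNth 0 y) = f (i.insertNth 1 y) := by
  have hshift : (i.insertNth 0 y + fun j => (((Pi.single i 1 : Fin (m + 1) → ℤ) j : ℤ) : ℝ))
      = i.insertNth (1 : ℝ) y := by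
    funext j
    refine Fin.succAboveCases i ?_ (fun j => ?_) j <;> simp
  rw [← hshift, hf]

theorem setIntegral_sum_pderiv₁₂_eq_zero {G : Fin n → (Fin n → ℝ) → ℝ}
    (hG : ∀ i, ContDiff ℝ 1 (G i)) (hper : ∀ i, TorusFun₁₂ (G i)) :
    ∫ x in Icc (0 : Fin n → ℝ) 1, ∑ i, pderiv₁₂ i (G i) x = 0 := by
  cases n with
  | zero => simp
  | succ m =>
    have hcont : Continuous fun x => ∑ i, pderiv₁₂ i (G i) x :=
      continuous_finsetSum _ fun i _ => (contDiff_pderiv₁₂ i (hG i) (zero_add 1).le).continuous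
    refine (integral_divergence_of_hasFDerivAt_off_countable' (0 : Fin (m + 1) → ℝ) 1
      zero_le_one G (fun i => fderiv ℝ (G i)) ∅ countable_empty
      (fun i => (hG i).continuous.continuousOn)
      (fun x _ i => ((hG i).differentiable one_ne_zero x).hasFDerivAt)
      hcont.integrableOn_Icc).trans ?_
    refine Finset.sum_eq_zero fun i _ => ?_
    simp [(hper i).insertNth_zero_eq_insertNth_one]

end PartialDerivative

section FokkerPlanck

variable {n : ℕ}

/-- The `i`-th component of the flux `ε ∇u - b u` of the advection-diffusion equation, oriented so
that the equation reads `∂ₜ u = div (flux)`. -/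
noncomputable def viscousFlux (ε : ℝ) (b : (Fin n → ℝ) → Fin n → ℝ) (u : (Fin n → ℝ) → ℝ)
    (i : Fin n) (x : Fin n → ℝ) : ℝ :=
  ε * pderiv₁₂ i u x - b x i * u x

/-- The Fokker–Planck operator `u ↦ ε Δu - div (b u)`. -/
noncomputable def fokkerPlanck (ε : ℝ) (b : (Fin n → ℝ) → Fin n → ℝ) (u : (Fin n → ℝ) → ℝ)
    (x : Fin n → ℝ) : ℝ :=
  ε * ∑ i, pderiv₁₂ i (pderiv₁₂ i u) x - ∑ i, pderiv₁₂ i (fun y => b y i * u y) x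

variable {ε : ℝ} {b : (Fin n → ℝ) → Fin n → ℝ} {u θ f q : (Fin n → ℝ) → ℝ} {η : ℝ → ℝ}

lemma contDiff_viscousFlux (hb : ContDiff ℝ 1 b) (hu : ContDiff ℝ 2 u) (i : Fin n) :
    ContDiff ℝ 1 (viscousFlux ε b u i) :=
  (contDiff_const.mul (contDiff_pderiv₁₂ i hu one_add_one_eq_two.le)).sub
    ((contDiff_pi.1 hb i).mul (hu.of_le one_le_two))

lemma TorusFun₁₂.viscousFlux (hb : ∀ i, TorusFun₁₂ fun x => b x i) (hu : TorusFun₁₂ u)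
    (i : Fin n) : TorusFun₁₂ (viscousFlux ε b u i) := by
  intro x k
  simp only [_root_.viscousFlux, hu x k, hb i x k, hu.pderiv₁₂ i x k]

lemma fokkerPlanck_eq_sum_pderiv₁₂ (hb : ContDiff ℝ 1 b) (hu : ContDiff ℝ 2 u) (x : Fin n → ℝ) :
    fokkerPlanck ε b u x = ∑ i, pderiv₁₂ i (viscousFlux ε b u i) x := by
  have hdu (i : Fin n) : DifferentiableAt ℝ (pderiv₁₂ i u) x :=
    (contDiff_pderiv₁₂ i hu one_add_one_eq_two.le).differentiable one_ne_zero x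
  have hbu (i : Fin n) : DifferentiableAt ℝ (fun y => b y i * u y) x :=
    ((contDiff_pi.1 hb i).mul (hu.of_le one_le_two)).differentiable one_ne_zero x
  rw [fokkerPlanck, Finset.mul_sum, ← Finset.sum_sub_distrib]
  refine Finset.sum_congr rfl fun i _ => ?_
  rw [← pderiv₁₂_const_mul i ε (hdu i), ← pderiv₁₂_sub i ((hdu i).const_mul ε) (hbu i)]
  rfl

lemma continuous_fokkerPlanck (hb : ContDiff ℝ 1 b) (hu : ContDiff ℝ 2 u) :
    Continuous (fokkerPlanck ε b u) := by
  simp only [funext (fokkerPlanck_eq_sum_pderiv₁₂ hb hu)]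
  exact continuous_finsetSum _ fun i _ =>
    (contDiff_pderiv₁₂ i (contDiff_viscousFlux hb hu i) (zero_add 1).le).continuous

theorem setIntegral_fokkerPlanck_eq_zero (hb : ContDiff ℝ 1 b)
    (hbper : ∀ i, TorusFun₁₂ fun x => b x i) (hu : ContDiff ℝ 2 u) (huper : TorusFun₁₂ u) :
    ∫ x in Icc (0 : Fin n → ℝ) 1, fokkerPlanck ε b u x = 0 := by
  simp only [fokkerPlanck_eq_sum_pderiv₁₂ hb hu]
  exact setIntegral_sum_pderiv₁₂_eq_zero (contDiff_viscousFlux hb hu)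
    (TorusFun₁₂.viscousFlux hbper huper)

lemma viscousFlux_mul {x : Fin n → ℝ} (hθ : DifferentiableAt ℝ θ x) (hf : DifferentiableAt ℝ f x)
    (i : Fin n) :
    viscousFlux ε b (fun y => θ y * f y) i x
      = f x * viscousFlux ε b θ i x + ε * (θ x * pderiv₁₂ i f x) := by
  simp only [viscousFlux, pderiv₁₂_mul i hθ hf]
  ring

theorem fokkerPlanck_mul (hb : ContDiff ℝ 1 b) (hθ : ContDiff ℝ 2 θ) (hf : ContDiff ℝ 2 f)
    (x : Fin n → ℝ) :
    fokkerPlanck ε b (fun y => θ y * f y) x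
      = f x * fokkerPlanck ε b θ x + ∑ i, pderiv₁₂ i f x * viscousFlux ε b θ i x
        + ε * ∑ i, pderiv₁₂ i (fun y => θ y * pderiv₁₂ i f y) x := by
  have hθd : Differentiable ℝ θ := hθ.differentiable two_ne_zero
  have hfd : Differentiable ℝ f := hf.differentiable two_ne_zero
  have hJ (i : Fin n) : DifferentiableAt ℝ (viscousFlux ε b θ i) x :=
    (contDiff_viscousFlux hb hθ i).differentiable one_ne_zero x
  have hθf (i : Fin n) : DifferentiableAt ℝ (fun y => θ y * pderiv₁₂ i f y) x :=
    (hθd x).mul ((contDiff_pderiv₁₂ i hf one_add_one_eq_two.le).differentiable one_ne_zero x)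
  have hflux (i : Fin n) : pderiv₁₂ i (viscousFlux ε b (fun y => θ y * f y) i) x
      = f x * pderiv₁₂ i (viscousFlux ε b θ i) x + pderiv₁₂ i f x * viscousFlux ε b θ i x
        + ε * pderiv₁₂ i (fun y => θ y * pderiv₁₂ i f y) x := by
    rw [funext (f := viscousFlux ε b _ i) fun y => viscousFlux_mul (hθd y) (hfd y) i,
      pderiv₁₂_add i ((hfd x).fun_mul (hJ i)) ((hθf i).const_mul ε), pderiv₁₂_mul i (hfd x) (hJ i),
      pderiv₁₂_const_mul i ε (hθf i)]
    ring
  simp only [fokkerPlanck_eq_sum_pderiv₁₂ hb (hθ.mul hf), fokkerPlanck_eq_sum_pderiv₁₂ hb hθ,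
    hflux, Finset.sum_add_distrib, ← Finset.mul_sum]

lemma contDiff_comp_of_contDiffAt (hη : ∀ x, ContDiffAt ℝ 2 η (q x)) (hq : ContDiff ℝ 2 q) :
    ContDiff ℝ 2 fun x => η (q x) :=
  contDiff_iff_contDiffAt.2 fun x => (hη x).comp x hq.contDiffAt

lemma pderiv₁₂_mul_pderiv₁₂_comp (hη : ∀ x, ContDiffAt ℝ 2 η (q x)) (hq : ContDiff ℝ 2 q)
    (hθ : Differentiable ℝ θ) (i : Fin n) (x : Fin n → ℝ) :
    pderiv₁₂ i (fun y => θ y * pderiv₁₂ i (fun z => η (q z)) y) x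
      = deriv η (q x) * pderiv₁₂ i (fun y => θ y * pderiv₁₂ i q y) x
        + θ x * (deriv (deriv η) (q x) * pderiv₁₂ i q x ^ 2) := by
  have hqd : Differentiable ℝ q := hq.differentiable two_ne_zero
  have hη' : DifferentiableAt ℝ (deriv η) (q x) :=
    ((hη x).derivWithin one_add_one_eq_two.le).differentiableAt one_ne_zero
  have hθq : DifferentiableAt ℝ (fun y => θ y * pderiv₁₂ i q y) x :=
    (hθ x).mul ((contDiff_pderiv₁₂ i hq one_add_one_eq_two.le).differentiable one_ne_zero x)
  have hchain (y : Fin n → ℝ) : θ y * pderiv₁₂ i (fun z => η (q z)) y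
      = deriv η (q y) * (θ y * pderiv₁₂ i q y) := by
    rw [pderiv₁₂_comp i ((hη y).differentiableAt two_ne_zero) (hqd y)]
    ring
  rw [funext hchain, pderiv₁₂_mul i (DifferentiableAt.fun_comp' x hη' (hqd x)) hθq,
    pderiv₁₂_comp i hη' (hqd x)]
  ring

theorem fokkerPlanck_mul_comp (hb : ContDiff ℝ 1 b) (hη : ∀ x, ContDiffAt ℝ 2 η (q x))
    (hθ : ContDiff ℝ 2 θ) (hq : ContDiff ℝ 2 q) (x : Fin n → ℝ) :
    fokkerPlanck ε b (fun y => θ y * η (q y)) x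
      = deriv η (q x) * fokkerPlanck ε b (fun y => θ y * q y) x
        + (η (q x) - q x * deriv η (q x)) * fokkerPlanck ε b θ x
        + ε * (θ x * (deriv (deriv η) (q x) * ∑ i, pderiv₁₂ i q x ^ 2)) := by
  rw [fokkerPlanck_mul hb hθ (contDiff_comp_of_contDiffAt hη hq), fokkerPlanck_mul hb hθ hq]
  simp only [pderiv₁₂_mul_pderiv₁₂_comp hη hq (hθ.differentiable two_ne_zero),
    pderiv₁₂_comp _ ((hη x).differentiableAt two_ne_zero) (hq.differentiable two_ne_zero x),
    Finset.sum_add_distrib, ← Finset.mul_sum, mul_assoc]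
  ring

end FokkerPlanck

section TimeDerivative

variable {X E : Type*} [NormedAddCommGroup X] [NormedSpace ℝ X] [NormedAddCommGroup E]
  [NormedSpace ℝ E] {f : ℝ → X → E}

lemma contDiff_slice {k : WithTop ℕ∞} (hf : ContDiff ℝ k (uncurry f)) (t : ℝ) :
    ContDiff ℝ k (f t) :=
  hf.comp (contDiff_const.prodMk contDiff_id)

lemma hasDerivAt_slice {t : ℝ} {x : X} (hf : DifferentiableAt ℝ (uncurry f) (t, x)) :
    HasDerivAt (fun s => f s x) (fderiv ℝ (uncurry f) (t, x) (1, 0)) t :=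
  hf.hasFDerivAt.comp_hasDerivAt (f := fun s => (s, x)) t
    ((hasDerivAt_id t).prodMk (hasDerivAt_const t x))

lemma continuous_deriv_slice (hf : ContDiff ℝ 1 (uncurry f)) :
    Continuous fun z : ℝ × X => deriv (fun s => f s z.2) z.1 := by
  simp only [fun z : ℝ × X => (hasDerivAt_slice (hf.differentiable one_ne_zero (z.1, z.2))).deriv]
  exact (hf.continuous_fderiv one_ne_zero).clm_apply continuous_const

end TimeDerivative

theorem intervalIntegral_setIntegral_deriv_eq_sub {X E : Type*} [TopologicalSpace X]
    [T2Space X] [SecondCountableTopology X] [MeasurableSpace X] [BorelSpace X] {μ : Measure X}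
    [SFinite μ] [IsFiniteMeasureOnCompacts μ]
    [NormedAddCommGroup E] [NormedSpace ℝ E] [CompleteSpace E]
    {K : Set X} (hK : IsCompact K) {a b : ℝ} (hab : a ≤ b) {f f' : ℝ → X → E}
    (hderiv : ∀ t ∈ Icc a b, ∀ x ∈ K, HasDerivAt (fun s => f s x) (f' t x) t)
    (hf' : ContinuousOn (uncurry f') (Icc a b ×ˢ K))
    (hfa : IntegrableOn (f a) K μ) (hfb : IntegrableOn (f b) K μ) :
    ∫ t in a..b, ∫ x in K, f' t x ∂μ = ∫ x in K, f b x ∂μ - ∫ x in K, f a x ∂μ := by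
  have hftc (x : X) (hx : x ∈ K) : ∫ t in a..b, f' t x = f b x - f a x := by
    have hf'x : ContinuousOn (fun t => f' t x) (Icc a b) :=
      hf'.comp (f := fun t => (t, x)) (by fun_prop) fun t ht => ⟨ht, hx⟩
    rw [← uIcc_of_le hab] at hderiv hf'x
    exact intervalIntegral.integral_eq_sub_of_hasDerivAt (fun t ht => hderiv t ht x hx)
      hf'x.intervalIntegrable
  have hint : Integrable (uncurry f') ((volume.restrict (uIoc a b)).prod (μ.restrict K)) := by
    rw [uIoc_of_le hab, Measure.prod_restrict]
    exact (hf'.integrableOn_compact (isCompact_Icc.prod hK)).mono_set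
      (prod_mono Ioc_subset_Icc_self subset_rfl)
  rw [intervalIntegral_integral_swap hint, setIntegral_congr_fun hK.measurableSet hftc,
    integral_sub hfb hfa]

lemma hasDerivAt_mul_comp_div {η f g : ℝ → ℝ} {f' g' t : ℝ} (hf : HasDerivAt f f' t)
    (hg : HasDerivAt g g' t) (hft : f t ≠ 0) (hη : DifferentiableAt ℝ η (g t / f t)) :
    HasDerivAt (fun s => f s * η (g s / f s))
      (deriv η (g t / f t) * g' + (η (g t / f t) - g t / f t * deriv η (g t / f t)) * f') t := by
  refine (hf.mul (hη.hasDerivAt.comp t (hg.div hf hft))).congr_deriv ?_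
  simp only [comp_apply, Pi.div_apply]
  field_simp
  ring

section FokkerPlanckSolution

variable {n : ℕ}

/-- Classical periodic solutions of `∂ₜ u + div (b u) = ε Δu` for times `t ≥ 0`. -/
structure IsFokkerPlanckSolution (ε : ℝ) (b : ℝ → (Fin n → ℝ) → Fin n → ℝ)
    (u : ℝ → (Fin n → ℝ) → ℝ) : Prop where
  contDiff : ContDiff ℝ 2 (uncurry u)
  periodic : ∀ t, TorusFun₁₂ (u t)
  deriv_eq : ∀ t x, 0 ≤ t → deriv (fun s => u s x) t = fokkerPlanck ε (b t) (u t) x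

variable {ε : ℝ} {b : ℝ → (Fin n → ℝ) → Fin n → ℝ} {v : ℝ → (Fin n → ℝ) → ℝ}

lemma IsFokkerPlanckSolution.hasDerivAt (hv : IsFokkerPlanckSolution ε b v) {t : ℝ} (ht : 0 ≤ t)
    (x : Fin n → ℝ) : HasDerivAt (fun s => v s x) (fokkerPlanck ε (b t) (v t) x) t := by
  rw [← hv.deriv_eq t x ht]
  exact (hasDerivAt_slice
    (hv.contDiff.differentiable two_ne_zero (t, x))).differentiableAt.hasDerivAt

lemma IsFokkerPlanckSolution.continuousOn_fokkerPlanck (hv : IsFokkerPlanckSolution ε b v) :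
    ContinuousOn (fun z : ℝ × (Fin n → ℝ) => fokkerPlanck ε (b z.1) (v z.1) z.2)
      (Ici 0 ×ˢ univ) :=
  (continuous_deriv_slice (hv.contDiff.of_le one_le_two)).continuousOn.congr fun z hz =>
    (hv.deriv_eq z.1 z.2 hz.1).symm

end FokkerPlanckSolution

section RelativeEntropy

variable {n : ℕ}

/-- The density `θ η(w / θ)` of the entropy of `w` relative to `θ`. -/
noncomputable def entropyDensity (η : ℝ → ℝ) (θ w : (Fin n → ℝ) → ℝ) (x : Fin n → ℝ) : ℝ :=
  θ x * η (w x / θ x)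

/-- The time derivative of `entropyDensity η θ w` when `θ` and `w` evolve by `fokkerPlanck ε b`. -/
noncomputable def entropyRate (ε : ℝ) (b : (Fin n → ℝ) → Fin n → ℝ) (η : ℝ → ℝ)
    (θ w : (Fin n → ℝ) → ℝ) (x : Fin n → ℝ) : ℝ :=
  deriv η (w x / θ x) * fokkerPlanck ε b w x
    + (η (w x / θ x) - w x / θ x * deriv η (w x / θ x)) * fokkerPlanck ε b θ x

/-- The density `θ η''(w / θ) |∇(w / θ)|²` of the entropy dissipated per unit of viscosity. -/
noncomputable def entropyDissipation (η : ℝ → ℝ) (θ w : (Fin n → ℝ) → ℝ) (x : Fin n → ℝ) : ℝ :=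
  θ x * (deriv (deriv η) (w x / θ x) * ∑ i, pderiv₁₂ i (fun y => w y / θ y) x ^ 2)

section Slice

variable {ε : ℝ} {b : (Fin n → ℝ) → Fin n → ℝ} {η : ℝ → ℝ} {θ w : (Fin n → ℝ) → ℝ}

lemma contDiff_entropyDensity (hη : ∀ x, ContDiffAt ℝ 2 η (w x / θ x)) (hθ : ContDiff ℝ 2 θ)
    (hθ₀ : ∀ x, θ x ≠ 0) (hw : ContDiff ℝ 2 w) : ContDiff ℝ 2 (entropyDensity η θ w) :=
  hθ.mul (contDiff_comp_of_contDiffAt hη (hw.div hθ hθ₀))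

lemma TorusFun₁₂.entropyDensity (η : ℝ → ℝ) (hθ : TorusFun₁₂ θ) (hw : TorusFun₁₂ w) :
    TorusFun₁₂ (entropyDensity η θ w) := fun x k => by
  simp only [_root_.entropyDensity, hθ x k, hw x k]

theorem fokkerPlanck_entropyDensity (hb : ContDiff ℝ 1 b)
    (hη : ∀ x, ContDiffAt ℝ 2 η (w x / θ x)) (hθ : ContDiff ℝ 2 θ) (hθ₀ : ∀ x, θ x ≠ 0)
    (hw : ContDiff ℝ 2 w) (x : Fin n → ℝ) :
    fokkerPlanck ε b (entropyDensity η θ w) x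
      = entropyRate ε b η θ w x + ε * entropyDissipation η θ w x := by
  have hmul : (fun y => θ y * (w y / θ y)) = w := funext fun y => mul_div_cancel₀ _ (hθ₀ y)
  have h := fokkerPlanck_mul_comp (ε := ε) hb hη hθ (hw.div hθ hθ₀) x
  rwa [hmul] at h

lemma continuous_entropyDissipation (hη : ∀ x, ContDiffAt ℝ 2 η (w x / θ x))
    (hθ : ContDiff ℝ 1 θ) (hθ₀ : ∀ x, θ x ≠ 0) (hw : ContDiff ℝ 1 w) :
    Continuous (entropyDissipation η θ w) := by
  have hq : ContDiff ℝ 1 fun x => w x / θ x := hw.div hθ hθ₀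
  have hη'' : Continuous fun x => deriv (deriv η) (w x / θ x) :=
    continuous_iff_continuousAt.2 fun x =>
      (((hη x).derivWithin one_add_one_eq_two.le).derivWithin (zero_add 1).le).continuousAt.comp
        (f := fun x => w x / θ x) hq.continuous.continuousAt
  exact hθ.continuous.mul (hη''.mul (continuous_finsetSum _ fun i _ =>
    (contDiff_pderiv₁₂ i hq (zero_add 1).le).continuous.pow 2))

theorem setIntegral_entropyRate (hb : ContDiff ℝ 1 b) (hbper : ∀ i, TorusFun₁₂ fun x => b x i)
    (hη : ∀ x, ContDiffAt ℝ 2 η (w x / θ x)) (hθ : ContDiff ℝ 2 θ) (hθper : TorusFun₁₂ θ)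
    (hθ₀ : ∀ x, θ x ≠ 0) (hw : ContDiff ℝ 2 w) (hwper : TorusFun₁₂ w) :
    ∫ x in Icc (0 : Fin n → ℝ) 1, entropyRate ε b η θ w x
      = -(ε * ∫ x in Icc (0 : Fin n → ℝ) 1, entropyDissipation η θ w x) := by
  have hentropy : ContDiff ℝ 2 (entropyDensity η θ w) := contDiff_entropyDensity hη hθ hθ₀ hw
  have hdissipation : Continuous fun x => ε * entropyDissipation η θ w x :=
    continuous_const.mul (continuous_entropyDissipation hη (hθ.of_le one_le_two) hθ₀
      (hw.of_le one_le_two))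
  simp only [← sub_eq_of_eq_add (fokkerPlanck_entropyDensity hb hη hθ hθ₀ hw _)]
  rw [integral_sub (continuous_fokkerPlanck hb hentropy).integrableOn_Icc
      hdissipation.integrableOn_Icc,
    setIntegral_fokkerPlanck_eq_zero hb hbper hentropy (hθper.entropyDensity η hwper),
    integral_const_mul, zero_sub]

end Slice

variable {ε : ℝ} {b : ℝ → (Fin n → ℝ) → Fin n → ℝ} {Θ v : ℝ → (Fin n → ℝ) → ℝ} {η : ℝ → ℝ}

lemma hasDerivAt_entropyDensity (hΘ : IsFokkerPlanckSolution ε b Θ)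
    (hv : IsFokkerPlanckSolution ε b v) {t : ℝ} (ht : 0 ≤ t) {x : Fin n → ℝ} (hΘ₀ : Θ t x ≠ 0)
    (hη : DifferentiableAt ℝ η (v t x / Θ t x)) :
    HasDerivAt (fun s => entropyDensity η (Θ s) (v s) x)
      (entropyRate ε (b t) η (Θ t) (v t) x) t :=
  hasDerivAt_mul_comp_div (hΘ.hasDerivAt ht x) (hv.hasDerivAt ht x) hΘ₀ hη

lemma continuousOn_entropyRate (hΘ : IsFokkerPlanckSolution ε b Θ)
    (hv : IsFokkerPlanckSolution ε b v) (hΘ₀ : ∀ t x, 0 ≤ t → Θ t x ≠ 0)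
    (hη : ∀ t x, 0 ≤ t → ContDiffAt ℝ 1 η (v t x / Θ t x)) :
    ContinuousOn (uncurry fun t => entropyRate ε (b t) η (Θ t) (v t)) (Ici 0 ×ˢ univ) := by
  let q : ℝ × (Fin n → ℝ) → ℝ := fun z => v z.1 z.2 / Θ z.1 z.2
  have hq : ContinuousOn q (Ici 0 ×ˢ univ) :=
    hv.contDiff.continuous.continuousOn.div hΘ.contDiff.continuous.continuousOn
      fun z hz => hΘ₀ z.1 z.2 hz.1
  have hηq : ContinuousOn (fun z => η (q z)) (Ici 0 ×ˢ univ) := fun z hz =>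
    (hη z.1 z.2 hz.1).continuousAt.comp_continuousWithinAt (f := q) (hq z hz)
  have hη'q : ContinuousOn (fun z => deriv η (q z)) (Ici 0 ×ˢ univ) := fun z hz =>
    ((hη z.1 z.2 hz.1).derivWithin (zero_add 1).le).continuousAt.comp_continuousWithinAt
      (f := q) (hq z hz)
  exact (hη'q.mul hv.continuousOn_fokkerPlanck).add
    ((hηq.sub (hq.mul hη'q)).mul hΘ.continuousOn_fokkerPlanck)

theorem setIntegral_entropyDensity_balance (hb : ∀ t, ContDiff ℝ 1 (b t))
    (hbper : ∀ t i, TorusFun₁₂ fun x => b t x i) (hΘ : IsFokkerPlanckSolution ε b Θ)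
    (hv : IsFokkerPlanckSolution ε b v) (hΘ₀ : ∀ t x, 0 ≤ t → Θ t x ≠ 0)
    (hη : ∀ t x, 0 ≤ t → ContDiffAt ℝ 2 η (v t x / Θ t x)) {t : ℝ} (ht : 0 ≤ t) :
    (∫ x in Icc (0 : Fin n → ℝ) 1, entropyDensity η (Θ t) (v t) x)
        + ε * ∫ τ in (0 : ℝ)..t, ∫ x in Icc (0 : Fin n → ℝ) 1, entropyDissipation η (Θ τ) (v τ) x
      = ∫ x in Icc (0 : Fin n → ℝ) 1, entropyDensity η (Θ 0) (v 0) x := by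
  have hentropy (s : ℝ) (hs : 0 ≤ s) :
      IntegrableOn (entropyDensity η (Θ s) (v s)) (Icc (0 : Fin n → ℝ) 1) :=
    (contDiff_entropyDensity (fun x => hη s x hs) (contDiff_slice hΘ.contDiff s)
      (fun x => hΘ₀ s x hs) (contDiff_slice hv.contDiff s)).continuous.integrableOn_Icc
  have hbalance := intervalIntegral_setIntegral_deriv_eq_sub
    (isCompact_Icc (a := (0 : Fin n → ℝ)) (b := 1)) ht
    (fun τ hτ x _ => hasDerivAt_entropyDensity hΘ hv hτ.1 (hΘ₀ τ x hτ.1)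
      ((hη τ x hτ.1).differentiableAt two_ne_zero))
    ((continuousOn_entropyRate hΘ hv hΘ₀ fun τ x hτ => (hη τ x hτ).of_le one_le_two).mono
      fun z hz => ⟨hz.1.1, trivial⟩)
    (hentropy 0 le_rfl) (hentropy t ht)
  have hrate : EqOn
      (fun τ => ∫ x in Icc (0 : Fin n → ℝ) 1, entropyRate ε (b τ) η (Θ τ) (v τ) x)
      (fun τ => -(ε * ∫ x in Icc (0 : Fin n → ℝ) 1, entropyDissipation η (Θ τ) (v τ) x))
      (uIcc 0 t) := by
    intro τ hτ
    rw [uIcc_of_le ht] at hτ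
    exact setIntegral_entropyRate (hb τ) (hbper τ) (fun x => hη τ x hτ.1)
      (contDiff_slice hΘ.contDiff τ) (hΘ.periodic τ) (fun x => hΘ₀ τ x hτ.1)
      (contDiff_slice hv.contDiff τ) (hv.periodic τ)
  rw [intervalIntegral.integral_congr hrate, intervalIntegral.integral_neg,
    intervalIntegral.integral_const_mul] at hbalance
  linarith

end RelativeEntropy

section PowerEntropy

variable {n : ℕ} {p : ℝ}

lemma contDiffAt_abs_rpow {k : ℕ∞} {s : ℝ} (hs : s ≠ 0) (p : ℝ) :
    ContDiffAt ℝ k (fun r => |r| ^ p) s :=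
  (contDiffAt_abs hs).rpow_const_of_ne (abs_ne_zero.2 hs)

lemma abs_rpow_sub_two_mul_sq {s : ℝ} (hs : s ≠ 0) (r : ℝ) : |s| ^ (r - 2) * s ^ 2 = |s| ^ r := by
  rw [← sq_abs, ← Real.rpow_natCast, ← Real.rpow_add (abs_pos.2 hs)]
  norm_num

lemma hasDerivAt_abs_rpow_of_ne {s : ℝ} (hs : s ≠ 0) (p : ℝ) :
    HasDerivAt (fun r => |r| ^ p) (p * |s| ^ (p - 2) * s) s := by
  refine ((hasDerivAt_abs hs).rpow_const (Or.inl (abs_ne_zero.2 hs))).congr_deriv ?_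
  have hpow : |s| ^ (p - 1) = |s| ^ (p - 2) * |s| := by
    rw [← Real.rpow_add_one (abs_ne_zero.2 hs)]
    ring_nf
  rw [hpow]
  linear_combination p * |s| ^ (p - 2) * sign_mul_abs s

lemma deriv_deriv_abs_rpow {s : ℝ} (hs : s ≠ 0) (p : ℝ) :
    deriv (deriv fun r => |r| ^ p) s = p * (p - 1) * |s| ^ (p - 2) := by
  have hderiv : deriv (fun r : ℝ => |r| ^ p) =ᶠ[nhds s] fun r => p * |r| ^ (p - 2) * r := by
    filter_upwards [isOpen_ne.mem_nhds hs] with r hr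
    exact (hasDerivAt_abs_rpow_of_ne hr p).deriv
  have hderiv₂ : deriv (fun r : ℝ => p * |r| ^ (p - 2) * r) s
      = p * ((p - 2) * |s| ^ (p - 2 - 2) * s) * s + p * |s| ^ (p - 2) * 1 :=
    (((hasDerivAt_abs_rpow_of_ne hs (p - 2)).const_mul p).mul (hasDerivAt_id s)).deriv
  rw [hderiv.deriv_eq, hderiv₂]
  linear_combination p * (p - 2) * abs_rpow_sub_two_mul_sq hs (p - 2)

lemma deriv_deriv_abs_rpow_mul_sq_pderiv₁₂ (hp : p ≠ 0) {q : (Fin n → ℝ) → ℝ} {x : Fin n → ℝ}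
    (hq : DifferentiableAt ℝ q x) (hqx : q x ≠ 0) (i : Fin n) :
    deriv (deriv fun r => |r| ^ p) (q x) * pderiv₁₂ i q x ^ 2
      = 4 * (p - 1) / p * pderiv₁₂ i (fun y => |q y| ^ (p / 2)) x ^ 2 := by
  have hhalf : HasDerivAt (fun r => |r| ^ (p / 2)) (p / 2 * |q x| ^ (p / 2 - 2) * q x) (q x) :=
    hasDerivAt_abs_rpow_of_ne hqx (p / 2)
  have hsq : (|q x| ^ (p / 2 - 2)) ^ 2 = |q x| ^ (p - 2 - 2) := by
    rw [← Real.rpow_mul_natCast (abs_nonneg _)]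
    ring_nf
  rw [deriv_deriv_abs_rpow hqx, pderiv₁₂_comp (η := fun r => |r| ^ (p / 2)) i
    hhalf.differentiableAt hq, hhalf.deriv, ← abs_rpow_sub_two_mul_sq hqx (p - 2), ← hsq]
  field_simp
  ring

lemma entropyDensity_abs_rpow {θ : (Fin n → ℝ) → ℝ} {x : Fin n → ℝ} (hθ : 0 < θ x)
    (w : (Fin n → ℝ) → ℝ) (p : ℝ) :
    entropyDensity (fun r => |r| ^ p) θ w x = |w x| ^ p / θ x ^ (p - 1) := by
  rw [entropyDensity, abs_div, abs_of_pos hθ, Real.div_rpow (abs_nonneg _) hθ.le,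
    Real.rpow_sub_one hθ.ne']
  field_simp

lemma entropyDissipation_abs_rpow (hp : p ≠ 0) {θ w : (Fin n → ℝ) → ℝ} {x : Fin n → ℝ}
    (hθ : DifferentiableAt ℝ θ x) (hθpos : ∀ y, 0 < θ y) (hw : DifferentiableAt ℝ w x)
    (hwx : w x ≠ 0) :
    entropyDissipation (fun r => |r| ^ p) θ w x
      = 4 * (p - 1) / p
        * (θ x * ∑ i, pderiv₁₂ i (fun y => |w y| ^ (p / 2) / θ y ^ (p / 2)) x ^ 2) := by
  have hq : DifferentiableAt ℝ (fun y => w y / θ y) x := by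
    fun_prop (disch := exact (hθpos x).ne')
  have hhalf : (fun y => |w y| ^ (p / 2) / θ y ^ (p / 2)) = fun y => |w y / θ y| ^ (p / 2) :=
    funext fun y => by
      rw [abs_div, abs_of_pos (hθpos y), Real.div_rpow (abs_nonneg _) (hθpos y).le]
  simp only [entropyDissipation, hhalf, Finset.mul_sum, mul_left_comm (θ x),
    deriv_deriv_abs_rpow_mul_sq_pderiv₁₂ hp hq (div_ne_zero hwx (hθpos x).ne')]

theorem stmt12_general {ε : ℝ} {b : ℝ → (Fin n → ℝ) → Fin n → ℝ} {Θ v : ℝ → (Fin n → ℝ) → ℝ}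
    (hp : p ≠ 0) (hb : ∀ t, ContDiff ℝ 1 (b t)) (hbper : ∀ t i, TorusFun₁₂ fun x => b t x i)
    (hΘ : IsFokkerPlanckSolution ε b Θ) (hΘpos : ∀ t x, 0 ≤ t → 0 < Θ t x)
    (hv : IsFokkerPlanckSolution ε b v) (hvne : ∀ t x, 0 ≤ t → v t x ≠ 0) {t : ℝ} (ht : 0 ≤ t) :
    (∫ x in Icc (0 : Fin n → ℝ) 1, |v t x| ^ p / Θ t x ^ (p - 1))
        + ε * (4 * (p - 1) / p) * ∫ τ in (0 : ℝ)..t, ∫ x in Icc (0 : Fin n → ℝ) 1,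
          Θ τ x * ∑ i, pderiv₁₂ i (fun y => |v τ y| ^ (p / 2) / Θ τ y ^ (p / 2)) x ^ 2
      = ∫ x in Icc (0 : Fin n → ℝ) 1, |v 0 x| ^ p / Θ 0 x ^ (p - 1) := by
  have hbalance := setIntegral_entropyDensity_balance hb hbper hΘ hv
    (fun s x hs => (hΘpos s x hs).ne') (fun s x hs => contDiffAt_abs_rpow (k := 2)
      (div_ne_zero (hvne s x hs) (hΘpos s x hs).ne') p) ht
  have hdissipation : EqOn
      (fun τ => ∫ x in Icc (0 : Fin n → ℝ) 1, entropyDissipation (fun r => |r| ^ p) (Θ τ) (v τ) x)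
      (fun τ => 4 * (p - 1) / p * ∫ x in Icc (0 : Fin n → ℝ) 1, Θ τ x
        * ∑ i, pderiv₁₂ i (fun y => |v τ y| ^ (p / 2) / Θ τ y ^ (p / 2)) x ^ 2)
      (uIcc 0 t) := by
    intro τ hτ
    rw [uIcc_of_le ht] at hτ
    simp only [← integral_const_mul, fun x => entropyDissipation_abs_rpow hp
      ((contDiff_slice hΘ.contDiff τ).differentiable two_ne_zero x) (fun y => hΘpos τ y hτ.1)
      ((contDiff_slice hv.contDiff τ).differentiable two_ne_zero x) (hvne τ x hτ.1)]
  simp only [fun x => entropyDensity_abs_rpow (hΘpos t x ht) (v t) p,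
    fun x => entropyDensity_abs_rpow (hΘpos 0 x le_rfl) (v 0) p] at hbalance
  rwa [intervalIntegral.integral_congr hdissipation, intervalIntegral.integral_const_mul,
    ← mul_assoc] at hbalance

end PowerEntropy

/-- The integrated entropy identity on the torus:
`∫ |v(t)|^p/Θ(t)^{p-1} dx + ε (4(p-1)/p) ∫₀ᵗ ∫ Θ |∇(|v|^{p/2}/Θ^{p/2})|² dx dτ
  = ∫ |v₀|^p dx`. -/
theorem stmt12 (n : ℕ) (hn : 0 < n)
    (ε : ℝ) (hε : 0 < ε)
    (p : ℝ) (hp : 1 < p)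
    (b : ℝ → (Fin n → ℝ) → (Fin n → ℝ))
    (hb : ContDiff ℝ (⊤ : ℕ∞) (Function.uncurry b))
    (hbper : ∀ t i, TorusFun₁₂ (fun x => b t x i))
    (Θ v : ℝ → (Fin n → ℝ) → ℝ)
    (hΘ : ContDiff ℝ (⊤ : ℕ∞) (Function.uncurry Θ))
    (hΘper : ∀ t, TorusFun₁₂ (Θ t))
    (hΘpos : ∀ t x, 0 ≤ t → 0 < Θ t x)
    (hΘinit : ∀ x, Θ 0 x = 1)
    (hΘPDE : ∀ t x, 0 ≤ t →
      deriv (fun s => Θ s x) t + ∑ i, pderiv₁₂ i (fun y => b t y i * Θ t y) x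
        = ε * ∑ i, pderiv₁₂ i (pderiv₁₂ i (Θ t)) x)
    (hv : ContDiff ℝ (⊤ : ℕ∞) (Function.uncurry v))
    (hvper : ∀ t, TorusFun₁₂ (v t))
    (hvne : ∀ t x, 0 ≤ t → v t x ≠ 0)
    (hvPDE : ∀ t x, 0 ≤ t →
      deriv (fun s => v s x) t + ∑ i, pderiv₁₂ i (fun y => b t y i * v t y) x
        = ε * ∑ i, pderiv₁₂ i (pderiv₁₂ i (v t)) x)
    (v₀ : (Fin n → ℝ) → ℝ) (hv₀ : ∀ x, v 0 x = v₀ x) :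
    ∀ t, 0 ≤ t →
      (∫ x in Set.Icc (0 : Fin n → ℝ) 1, |v t x| ^ p / Θ t x ^ (p - 1))
          + ε * (4 * (p - 1) / p) *
              ∫ τ in (0:ℝ)..t, ∫ x in Set.Icc (0 : Fin n → ℝ) 1,
                Θ τ x *
                  ∑ i, (pderiv₁₂ i (fun y => |v τ y| ^ (p / 2) / Θ τ y ^ (p / 2)) x) ^ 2
        = ∫ x in Set.Icc (0 : Fin n → ℝ) 1, |v₀ x| ^ p := by
  intro t ht
  have hΘsol : IsFokkerPlanckSolution ε b Θ :=
    ⟨hΘ.of_le ENat.LEInfty.out, hΘper, fun t x ht => eq_sub_of_add_eq (hΘPDE t x ht)⟩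
  have hvsol : IsFokkerPlanckSolution ε b v :=
    ⟨hv.of_le ENat.LEInfty.out, hvper, fun t x ht => eq_sub_of_add_eq (hvPDE t x ht)⟩
  simpa only [hΘinit, hv₀, Real.one_rpow, div_one] using stmt12_general
    (zero_lt_one.trans hp).ne' (contDiff_slice (hb.of_le ENat.LEInfty.out)) hbper hΘsol hΘpos
    hvsol hvne ht
end

section
/- Let ε > 0, let A : ℝ² → ℝ^{2×2} be smooth, let D > 0, and let u : [0,∞)×ℝ → ℝ² be a bounded smooth solution of u_t + A(u) u_x = ε u_{xx} with |u(t,x)| ≤ D for all (t,x) and with initial data u(0,·) = J_ε ∗ u_0, where u_0 ∈ L^∞(ℝ; ℝ²) with ‖u_0‖_{L^∞} ≤ D and J_ε is the standard Friedrichs mollifier at scale ε. Then there is a constant C depending only on D and A such that ‖u_x(t,·)‖_{L^∞(ℝ)} ≤ C ε^{−1} for all t ≥ 0. -/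
open Matrix MeasureTheory

/-- The standard bump function generating the Friedrichs mollifier. -/
noncomputable def bump₁₆ (x : ℝ) : ℝ :=
  if |x| < 1 then Real.exp (-(1 - x ^ 2)⁻¹) else 0

/-- The standard (normalized) Friedrichs mollifier kernel. -/
noncomputable def stdMollifier₁₆ (x : ℝ) : ℝ :=
  bump₁₆ x / ∫ y, bump₁₆ y

/-- The Friedrichs mollifier at scale `ε`. -/
noncomputable def friedrichs₁₆ (ε x : ℝ) : ℝ :=
  ε⁻¹ * stdMollifier₁₆ (x / ε)

/-!
Fix `x₀` and compare `u` at the reflected points `x₀ ± s`. If `v` is scalar with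
`|v_t - ε v_xx| ≤ F` and `|v| ≤ D`, then `v(t, x₀ + s) - v(t, x₀ - s)` vanishes at `s = 0` and is
dominated on `0 ≤ s ≤ r` by a concave parabola in `s`, by the maximum principle. Dividing by `s`
bounds `|v_x(t, x₀)|` by `r F / (2 ε) + D / r` plus the bound at time `0`. Testing with norm-one
functionals gives the same estimate for vector-valued `u`.

In the equation the source `A(u) u_x` is bounded by `M |u_x|`, which is not yet known to be bounded
on `ℝ`. So choose a point which maximises `|u_x|` with a weight vanishing at distance `ε`: near it
`|u_x|` at most doubles, and for `r` a small multiple of the weight `d ≤ ε` the source term is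
absorbed by the left-hand side, leaving `D / r`, which is of order `D / d`. At time `0`, the
gradient of `J_ε ∗ u₀` is at most `‖J'‖_{L¹} D / ε`.
-/

section

open Set Filter Topology Metric Function

variable {E : Type*} [NormedAddCommGroup E] [NormedSpace ℝ E]

lemma nonpos_of_isLocalMax_of_hasDerivAt {g g' : ℝ → ℝ} {g'' a : ℝ} (hmax : IsLocalMax g a)
    (hg : ∀ᶠ s in 𝓝 a, HasDerivAt g (g' s) s) (hg' : HasDerivAt g' g'' a) : g'' ≤ 0 := by
  by_contra! hpos
  have hderiv : deriv g =ᶠ[𝓝 a] g' := hg.mono fun s hs ↦ hs.deriv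
  have hderiv2 : deriv (deriv g) a = g'' := hderiv.deriv_eq.trans hg'.deriv
  have hmin : IsLocalMin g a :=
    isLocalMin_of_deriv_deriv_pos (hderiv2 ▸ hpos) hmax.deriv_eq_zero hg.self_of_nhds.continuousAt
  have hconst : g =ᶠ[𝓝 a] fun _ ↦ g a := hmax.and hmin |>.mono fun s hs ↦ le_antisymm hs.1 hs.2
  have hzero : deriv (deriv g) a = 0 := by
    simpa only [deriv_const', deriv_const] using hconst.deriv.deriv_eq
  exact hpos.ne' (hderiv2.symm.trans hzero)

lemma nonneg_of_isLocalMaxOn_Iic_of_hasDerivAt {h : ℝ → ℝ} {h' a : ℝ}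
    (hmax : IsLocalMaxOn h (Iic a) a) (hh : HasDerivAt h h' a) : 0 ≤ h' := by
  have hcone : (-1 : ℝ) ∈ posTangentConeAt (Iic a) a :=
    mem_posTangentConeAt_of_segment_subset <|
      (convex_Iic a).segment_subset self_mem_Iic (by simp)
  simpa using hmax.hasFDerivWithinAt_nonpos hh.hasFDerivAt.hasFDerivWithinAt hcone

theorem nonpos_of_heat_subsolution {z zt zs zss : ℝ → ℝ → ℝ} {T a b κ : ℝ} (hκ : 0 ≤ κ)
    (hz : ContinuousOn (uncurry z) (Icc 0 T ×ˢ Icc a b))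
    (hzt : ∀ t ∈ Ioc 0 T, ∀ s ∈ Ioo a b, HasDerivAt (fun τ ↦ z τ s) (zt t s) t)
    (hzs : ∀ t ∈ Ioc 0 T, ∀ s ∈ Ioo a b, HasDerivAt (z t) (zs t s) s)
    (hzss : ∀ t ∈ Ioc 0 T, ∀ s ∈ Ioo a b, HasDerivAt (zs t) (zss t s) s)
    (hheat : ∀ t ∈ Ioc 0 T, ∀ s ∈ Ioo a b, zt t s ≤ κ * zss t s)
    (hinit : ∀ s ∈ Icc a b, z 0 s ≤ 0)
    (hleft : ∀ t ∈ Icc 0 T, z t a ≤ 0) (hright : ∀ t ∈ Icc 0 T, z t b ≤ 0) :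
    ∀ t ∈ Icc 0 T, ∀ s ∈ Icc a b, z t s ≤ 0 := by
  intro t₁ ht₁ s₁ hs₁
  by_contra! hpos
  have hT : 0 ≤ T := ht₁.1.trans ht₁.2
  -- Subtracting `δ t` makes the subsolution strict while keeping it positive at `(t₁, s₁)`.
  set δ := z t₁ s₁ / (T + 1) with hδ
  have hδ0 : 0 < δ := by positivity
  obtain ⟨⟨t, s⟩, ⟨ht, hs⟩, hmax⟩ := (isCompact_Icc.prod isCompact_Icc).exists_isMaxOn
    ⟨(t₁, s₁), ht₁, hs₁⟩ (hz.sub (f := uncurry z) (g := fun p ↦ δ * p.1) (by fun_prop))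
  replace hmax : ∀ t' ∈ Icc 0 T, ∀ s' ∈ Icc a b, z t' s' - δ * t' ≤ z t s - δ * t :=
    fun t' ht' s' hs' ↦ hmax (mk_mem_prod ht' hs')
  have hzpos : 0 < z t s := by
    have hδT : δ * (T + 1) = z t₁ s₁ := by rw [hδ]; field_simp
    nlinarith [hmax t₁ ht₁ s₁ hs₁, mul_nonneg hδ0.le ht.1, mul_le_mul_of_nonneg_left ht₁.2 hδ0.le]
  have ht0 : t ∈ Ioc 0 T :=
    ⟨ht.1.lt_of_ne (by rintro rfl; exact hzpos.not_ge (hinit s hs)), ht.2⟩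
  have hs0 : s ∈ Ioo a b :=
    ⟨hs.1.lt_of_ne (by rintro rfl; exact hzpos.not_ge (hleft t ht)),
      hs.2.lt_of_ne (by rintro rfl; exact hzpos.not_ge (hright t ht))⟩
  have htime : 0 ≤ zt t s - δ := by
    refine nonneg_of_isLocalMaxOn_Iic_of_hasDerivAt (a := t)
      (h := fun τ ↦ z τ s - δ * τ) ?_ ?_
    · filter_upwards [Ioc_mem_nhdsLE ht0.1] with τ hτ
      exact hmax τ ⟨hτ.1.le, hτ.2.trans ht.2⟩ s hs
    · simpa only [mul_one] using! (hzt t ht0 s hs0).sub ((hasDerivAt_id t).const_mul δ)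
  have hspace : zss t s ≤ 0 := by
    refine nonpos_of_isLocalMax_of_hasDerivAt (g := z t) ?_ ?_ (hzss t ht0 s hs0)
    · filter_upwards [Ioo_mem_nhds hs0.1 hs0.2] with s' hs'
      simpa using hmax t ht s' (Ioo_subset_Icc_self hs')
    · filter_upwards [Ioo_mem_nhds hs0.1 hs0.2] with s' hs' using hzs t ht0 s' hs'
  linarith [hheat t ht0 s hs0, mul_nonpos_of_nonneg_of_nonpos hκ hspace]

lemma le_of_hasDerivAt_of_sub_le {f : ℝ → ℝ} {f' x K : ℝ} (hf : HasDerivAt f f' x)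
    (hK : ∀ᶠ s in 𝓝[>] 0, f (x + s) - f (x - s) ≤ K * s) : 2 * f' ≤ K := by
  have hsymm : HasDerivAt (fun s ↦ f (x + s) - f (x - s)) (2 * f') 0 := by
    have hadd := HasDerivAt.comp_const_add (f := f) (f' := f') x 0 (by simpa using hf)
    have hsub := HasDerivAt.comp_const_sub (f := f) (f' := f') x 0 (by simpa using hf)
    exact (hadd.sub hsub).congr_deriv (by ring)
  refine le_of_tendsto
    ((hasDerivWithinAt_iff_tendsto_slope' self_notMem_Ioi).1 hsymm.hasDerivWithinAt) ?_
  filter_upwards [hK, self_mem_nhdsWithin] with s hs hs0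
  simpa [slope_def_field, div_le_iff₀ (mem_Ioi.1 hs0)] using hs

-- Maximise `(R - dist x x₁) * g t x` over the cylinder and let `d` be the weight at the maximum:
-- on the ball of radius `d / 2` the weight is at least `d / 2`.
lemma exists_forall_closedBall_le_two_mul {S X : Type*} [TopologicalSpace S] [PseudoMetricSpace X]
    [ProperSpace X] {g : S → X → ℝ} {K : Set S} {R : ℝ} {t₁ : S} {x₁ : X} (hK : IsCompact K)
    (hR : 0 ≤ R) (hg : ContinuousOn (uncurry g) (K ×ˢ closedBall x₁ R)) (ht₁ : t₁ ∈ K)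
    (hpos : 0 < R * g t₁ x₁) :
    ∃ t₀ ∈ K, ∃ x₀, ∃ d > 0, d ≤ R ∧ 0 < g t₀ x₀ ∧ R * g t₁ x₁ ≤ d * g t₀ x₀ ∧
      ∀ t ∈ K, ∀ x ∈ closedBall x₀ (d / 2), g t x ≤ 2 * g t₀ x₀ := by
  obtain ⟨⟨t₀, x₀⟩, ⟨ht₀, hx₀⟩, hmax⟩ := (hK.prod (isCompact_closedBall x₁ R)).exists_isMaxOn
    ⟨(t₁, x₁), ht₁, mem_closedBall_self hR⟩
    (ContinuousOn.mul (f := fun p ↦ R - dist p.2 x₁) (by fun_prop) hg)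
  replace hmax : ∀ t ∈ K, ∀ x ∈ closedBall x₁ R,
      (R - dist x x₁) * g t x ≤ (R - dist x₀ x₁) * g t₀ x₀ :=
    fun t ht x hx ↦ hmax (mk_mem_prod ht hx)
  obtain ⟨d, hd⟩ : ∃ d, d = R - dist x₀ x₁ := ⟨_, rfl⟩
  rw [← hd] at hmax
  have hle : R * g t₁ x₁ ≤ d * g t₀ x₀ := by
    simpa using hmax t₁ ht₁ x₁ (mem_closedBall_self hR)
  have hd_nonneg : 0 ≤ d := by rw [hd]; exact sub_nonneg.2 hx₀
  have hg₀ : 0 < g t₀ x₀ := pos_of_mul_pos_right (hpos.trans_le hle) hd_nonneg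
  have hd_pos : 0 < d := pos_of_mul_pos_left (hpos.trans_le hle) hg₀.le
  refine ⟨t₀, ht₀, x₀, d, hd_pos, by linarith [dist_nonneg (x := x₀) (y := x₁)], hg₀, hle,
    fun t ht x hx ↦ ?_⟩
  have hweight : d / 2 ≤ R - dist x x₁ := by
    linarith [dist_triangle x x₀ x₁, mem_closedBall.1 hx]
  have hmax_tx := hmax t ht x (mem_closedBall.2 (by linarith))
  by_contra! hlt
  nlinarith

/-- `u` is a classical function on `[0, ∞) × ℝ` with the derivatives that occur in a parabolic
equation: `ut = ∂u/∂t`, `ux = ∂u/∂x` and `uxx = ∂²u/∂x²`. The derivatives `ut` and `uxx` are only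
required at positive times; `ux` exists and is continuous up to `t = 0`. -/
structure HasParabolicDerivs (u ut ux uxx : ℝ → ℝ → E) : Prop where
  continuousOn : ContinuousOn (uncurry u) (Ici 0 ×ˢ univ)
  continuousOn_space : ContinuousOn (uncurry ux) (Ici 0 ×ˢ univ)
  hasDerivAt_time : ∀ t > 0, ∀ x, HasDerivAt (fun s ↦ u s x) (ut t x) t
  hasDerivAt_space : ∀ t ≥ 0, ∀ x, HasDerivAt (u t) (ux t x) x
  hasDerivAt_space_space : ∀ t > 0, ∀ x, HasDerivAt (ux t) (uxx t x) x

namespace HasParabolicDerivs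

lemma of_contDiff {u : ℝ → ℝ → E} (hu : ContDiff ℝ 2 (uncurry u)) :
    HasParabolicDerivs u (fun t x ↦ deriv (fun s ↦ u s x) t) (fun t x ↦ deriv (u t) x)
      (fun t x ↦ deriv (deriv (u t)) x) where
  continuousOn := hu.continuous.continuousOn
  continuousOn_space := by
    have hpartial : (uncurry fun t x ↦ deriv (u t) x) =
        fun p ↦ fderiv ℝ (uncurry u) p (0, 1) := by
      funext p
      have hline : HasDerivAt (fun y : ℝ ↦ (p.1, y)) ((0 : ℝ), (1 : ℝ)) p.2 :=
        (hasDerivAt_const p.2 p.1).prodMk (hasDerivAt_id p.2)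
      have hfd : HasFDerivAt (uncurry u) (fderiv ℝ (uncurry u) p) (p.1, p.2) :=
        (hu.differentiable (by simp)).differentiableAt.hasFDerivAt
      exact (hfd.comp_hasDerivAt p.2 hline).deriv
    rw [hpartial]
    exact ((hu.continuous_fderiv (by simp)).clm_apply continuous_const).continuousOn
  hasDerivAt_time t _ x :=
    ((hu.comp (contDiff_prodMk_left x)).differentiable (by simp) t).hasDerivAt
  hasDerivAt_space t _ x :=
    ((hu.comp (contDiff_prodMk_right t)).differentiable (by simp) x).hasDerivAt
  hasDerivAt_space_space t _ x :=
    ((hu.comp (contDiff_prodMk_right t)).differentiable_deriv_two x).hasDerivAt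

lemma clm_comp {u ut ux uxx : ℝ → ℝ → E} {F : Type*} [NormedAddCommGroup F] [NormedSpace ℝ F]
    (hu : HasParabolicDerivs u ut ux uxx) (φ : E →L[ℝ] F) :
    HasParabolicDerivs (fun t x ↦ φ (u t x)) (fun t x ↦ φ (ut t x)) (fun t x ↦ φ (ux t x))
      (fun t x ↦ φ (uxx t x)) where
  continuousOn := φ.continuous.comp_continuousOn hu.continuousOn
  continuousOn_space := φ.continuous.comp_continuousOn hu.continuousOn_space
  hasDerivAt_time t ht x := φ.hasFDerivAt.comp_hasDerivAt t (hu.hasDerivAt_time t ht x)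
  hasDerivAt_space t ht x := φ.hasFDerivAt.comp_hasDerivAt x (hu.hasDerivAt_space t ht x)
  hasDerivAt_space_space t ht x :=
    φ.hasFDerivAt.comp_hasDerivAt x (hu.hasDerivAt_space_space t ht x)

lemma reflect_sub {u ut ux uxx : ℝ → ℝ → E} (hu : HasParabolicDerivs u ut ux uxx) (x₀ : ℝ) :
    HasParabolicDerivs (fun t s ↦ u t (x₀ + s) - u t (x₀ - s))
      (fun t s ↦ ut t (x₀ + s) - ut t (x₀ - s)) (fun t s ↦ ux t (x₀ + s) + ux t (x₀ - s))
      (fun t s ↦ uxx t (x₀ + s) - uxx t (x₀ - s)) where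
  continuousOn :=
    (hu.continuousOn.comp (f := fun p : ℝ × ℝ ↦ (p.1, x₀ + p.2)) (by fun_prop)
      fun _ hp ↦ ⟨hp.1, mem_univ _⟩).sub
    (hu.continuousOn.comp (f := fun p : ℝ × ℝ ↦ (p.1, x₀ - p.2)) (by fun_prop)
      fun _ hp ↦ ⟨hp.1, mem_univ _⟩)
  continuousOn_space :=
    (hu.continuousOn_space.comp (f := fun p : ℝ × ℝ ↦ (p.1, x₀ + p.2)) (by fun_prop)
      fun _ hp ↦ ⟨hp.1, mem_univ _⟩).add
    (hu.continuousOn_space.comp (f := fun p : ℝ × ℝ ↦ (p.1, x₀ - p.2)) (by fun_prop)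
      fun _ hp ↦ ⟨hp.1, mem_univ _⟩)
  hasDerivAt_time t ht s := (hu.hasDerivAt_time t ht _).sub (hu.hasDerivAt_time t ht _)
  hasDerivAt_space t ht s := by
    simpa only [sub_neg_eq_add] using! ((hu.hasDerivAt_space t ht (x₀ + s)).comp_const_add x₀ s).sub
      ((hu.hasDerivAt_space t ht (x₀ - s)).comp_const_sub x₀ s)
  hasDerivAt_space_space t ht s := by
    simpa only [← sub_eq_add_neg] using!
      ((hu.hasDerivAt_space_space t ht (x₀ + s)).comp_const_add x₀ s).add
      ((hu.hasDerivAt_space_space t ht (x₀ - s)).comp_const_sub x₀ s)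

lemma sub_parabola {w wt ws wss : ℝ → ℝ → ℝ} (hw : HasParabolicDerivs w wt ws wss) (K B : ℝ) :
    HasParabolicDerivs (fun t s ↦ w t s - (K * s - B * s ^ 2)) wt
      (fun t s ↦ ws t s - (K - 2 * B * s)) (fun t s ↦ wss t s + 2 * B) where
  continuousOn := hw.continuousOn.sub (by fun_prop)
  continuousOn_space := hw.continuousOn_space.sub (by fun_prop)
  hasDerivAt_time t ht s := (hw.hasDerivAt_time t ht s).sub_const _
  hasDerivAt_space t ht s := by
    have hparabola := ((hasDerivAt_id s).const_mul K).sub ((hasDerivAt_pow 2 s).const_mul B)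
    exact ((hw.hasDerivAt_space t ht s).sub hparabola).congr_deriv (by simp; ring)
  hasDerivAt_space_space t ht s := by
    have hline := ((hasDerivAt_id s).const_mul (2 * B)).const_sub K
    exact ((hw.hasDerivAt_space_space t ht s).sub hline).congr_deriv (by simp)

lemma le_mul_of_boundary_le {w wt ws wss : ℝ → ℝ → ℝ} {ε T r F G H : ℝ}
    (hw : HasParabolicDerivs w wt ws wss) (hε : 0 < ε) (hF : 0 ≤ F) (hG : 0 ≤ G) (hH : 0 ≤ H)
    (hheat : ∀ t ∈ Ioc 0 T, ∀ s ∈ Ioo 0 r, wt t s - ε * wss t s ≤ F)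
    (hinit : ∀ s ∈ Icc 0 r, w 0 s ≤ G * s)
    (hleft : ∀ t ∈ Icc 0 T, w t 0 ≤ 0) (hright : ∀ t ∈ Icc 0 T, w t r ≤ H)
    {t s : ℝ} (ht : t ∈ Icc 0 T) (hs : s ∈ Ioc 0 r) :
    w t s ≤ (r * F / (2 * ε) + H / r + G) * s := by
  have hr : 0 < r := hs.1.trans_le hs.2
  -- The concave barrier `K s - B s²` satisfies `-ε ∂²(K s - B s²) = F`, and `K` is chosen so that
  -- it dominates `w` on the parabolic boundary.
  obtain ⟨B, hB⟩ : ∃ B, B = F / (2 * ε) := ⟨_, rfl⟩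
  obtain ⟨K, hK⟩ : ∃ K, K = r * F / (2 * ε) + H / r + G := ⟨_, rfl⟩
  have hB0 : 0 ≤ B := by rw [hB]; positivity
  have hbarrier {s : ℝ} (hs : s ∈ Icc 0 r) : H / r * s + G * s ≤ K * s - B * s ^ 2 := by
    have hgap : 0 ≤ B * s * (r - s) := mul_nonneg (mul_nonneg hB0 hs.1) (sub_nonneg.2 hs.2)
    have hKB : K = r * B + H / r + G := by rw [hK, hB, mul_div_assoc]
    rw [hKB]
    linear_combination hgap
  have hz := hw.sub_parabola K B
  have hle : w t s - (K * s - B * s ^ 2) ≤ 0 := by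
    refine nonpos_of_heat_subsolution (T := T) (a := 0) (b := r) hε.le
      (hz.continuousOn.mono (prod_mono Icc_subset_Ici_self (subset_univ _)))
      (fun t ht s _ ↦ hz.hasDerivAt_time t ht.1 s) (fun t ht s _ ↦ hz.hasDerivAt_space t ht.1.le s)
      (fun t ht s _ ↦ hz.hasDerivAt_space_space t ht.1 s) (fun t ht s hs ↦ ?_) (fun s hs ↦ ?_)
      (fun t ht ↦ ?_) (fun t ht ↦ ?_) t ht s (Ioc_subset_Icc_self hs)
    · have hBF : ε * (2 * B) = F := by rw [hB]; field_simp
      linarith [hheat t ht s hs]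
    · have : 0 ≤ H / r * s := mul_nonneg (by positivity) hs.1
      linarith [hinit s hs, hbarrier hs]
    · simpa using hleft t ht
    · have hHr : H / r * r = H := div_mul_cancel₀ H hr.ne'
      have : 0 ≤ G * r := by positivity
      linarith [hright t ht, hbarrier (right_mem_Icc.2 hr.le)]
  rw [← hK]
  linarith [mul_nonneg hB0 (sq_nonneg s)]

lemma space_deriv_le {v vt vx vxx : ℝ → ℝ → ℝ} {ε T x₀ r D F G : ℝ}
    (hv : HasParabolicDerivs v vt vx vxx) (hε : 0 < ε) (hT : 0 ≤ T) (hr : 0 < r) (hF : 0 ≤ F)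
    (hbd : ∀ t ∈ Icc 0 T, ∀ x ∈ closedBall x₀ r, |v t x| ≤ D)
    (hinit : ∀ x ∈ closedBall x₀ r, |vx 0 x| ≤ G)
    (hheat : ∀ t ∈ Ioc 0 T, ∀ x ∈ closedBall x₀ r, |vt t x - ε * vxx t x| ≤ F) :
    vx T x₀ ≤ r * F / (2 * ε) + D / r + G := by
  have hx₀ : x₀ ∈ closedBall x₀ r := mem_closedBall_self hr.le
  have hD : 0 ≤ D := (abs_nonneg _).trans (hbd 0 ⟨le_rfl, hT⟩ x₀ hx₀)
  have hG : 0 ≤ G := (abs_nonneg _).trans (hinit x₀ hx₀)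
  have hmem {s : ℝ} (hs : s ∈ Icc 0 r) : x₀ + s ∈ closedBall x₀ r ∧ x₀ - s ∈ closedBall x₀ r := by
    simpa [abs_of_nonneg hs.1] using hs.2
  have htwo {s : ℝ} (hs : s ∈ Ioc 0 r) :
      v T (x₀ + s) - v T (x₀ - s) ≤ (r * (2 * F) / (2 * ε) + 2 * D / r + 2 * G) * s := by
    refine (hv.reflect_sub x₀).le_mul_of_boundary_le (T := T) hε (by positivity) (by positivity)
      (by positivity) (fun t ht s hs ↦ ?_) (fun s hs ↦ ?_) (fun t _ ↦ by simp) (fun t ht ↦ ?_)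
      ⟨hT, le_rfl⟩ hs
    · obtain ⟨hadd, hsub⟩ := hmem (Ioo_subset_Icc_self hs)
      linarith [(abs_le.1 (hheat t ht _ hadd)).2, (abs_le.1 (hheat t ht _ hsub)).1]
    · obtain ⟨hadd, hsub⟩ := hmem hs
      have hmv := (convex_closedBall x₀ r).norm_image_sub_le_of_norm_hasDerivWithin_le
        (fun x _ ↦ (hv.hasDerivAt_space 0 le_rfl x).hasDerivWithinAt) hinit hsub hadd
      calc v 0 (x₀ + s) - v 0 (x₀ - s) ≤ G * ‖x₀ + s - (x₀ - s)‖ := (Real.le_norm_self _).trans hmv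
        _ = 2 * G * s := by
          rw [add_sub_sub_cancel, Real.norm_of_nonneg (add_nonneg hs.1 hs.1)]; ring
    · obtain ⟨hadd, hsub⟩ := hmem (right_mem_Icc.2 hr.le)
      linarith [(abs_le.1 (hbd t ht _ hadd)).2, (abs_le.1 (hbd t ht _ hsub)).1]
  have := le_of_hasDerivAt_of_sub_le (hv.hasDerivAt_space T hT x₀) <| by
    filter_upwards [Ioc_mem_nhdsGT hr] with s hs using htwo hs
  linear_combination this / 2

variable {u ut ux uxx : ℝ → ℝ → E} {ε T D G : ℝ}

lemma norm_space_deriv_le_of_source_le {x₀ r F : ℝ} (hu : HasParabolicDerivs u ut ux uxx)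
    (hε : 0 < ε) (hT : 0 ≤ T) (hr : 0 < r) (hF : 0 ≤ F)
    (hbd : ∀ t ∈ Icc 0 T, ∀ x ∈ closedBall x₀ r, ‖u t x‖ ≤ D)
    (hinit : ∀ x ∈ closedBall x₀ r, ‖ux 0 x‖ ≤ G)
    (hheat : ∀ t ∈ Ioc 0 T, ∀ x ∈ closedBall x₀ r, ‖ut t x - ε • uxx t x‖ ≤ F) :
    ‖ux T x₀‖ ≤ r * F / (2 * ε) + D / r + G := by
  obtain ⟨φ, hφ, hφx⟩ := exists_dual_vector'' ℝ (ux T x₀)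
  have hφ_le (w : E) : |φ w| ≤ ‖w‖ := by
    simpa using φ.le_of_opNorm_le hφ w
  rw [show ‖ux T x₀‖ = φ (ux T x₀) from hφx.symm]
  refine (hu.clm_comp φ).space_deriv_le hε hT hr hF
    (fun t ht x hx ↦ (hφ_le _).trans (hbd t ht x hx))
    (fun x hx ↦ (hφ_le _).trans (hinit x hx)) (fun t ht x hx ↦ ?_)
  simpa only [map_sub, map_smul, smul_eq_mul] using (hφ_le _).trans (hheat t ht x hx)

theorem norm_space_deriv_le {M : ℝ} (hu : HasParabolicDerivs u ut ux uxx)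
    (hε : 0 < ε) (hM : 0 ≤ M) (hbd : ∀ t ≥ 0, ∀ x, ‖u t x‖ ≤ D) (hinit : ∀ x, ‖ux 0 x‖ ≤ G)
    (hpde : ∀ t > 0, ∀ x, ‖ut t x - ε • uxx t x‖ ≤ M * ‖ux t x‖) {t x : ℝ} (ht : 0 ≤ t) :
    ‖ux t x‖ ≤ 4 * (M + 1) * D / ε + 2 * G := by
  have hD : 0 ≤ D := (norm_nonneg _).trans (hbd 0 le_rfl x)
  have hG : 0 ≤ G := (norm_nonneg _).trans (hinit x)
  rcases (norm_nonneg (ux t x)).eq_or_lt with hzero | hpos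
  · rw [← hzero]; positivity
  obtain ⟨t₀, ht₀, x₀, d, hd, hdε, hp, hle, hball⟩ :=
    exists_forall_closedBall_le_two_mul (g := fun t x ↦ ‖ux t x‖) (K := Icc 0 t) (t₁ := t)
      isCompact_Icc hε.le
      (hu.continuousOn_space.norm.mono (prod_mono Icc_subset_Ici_self (subset_univ _)))
      ⟨ht, le_rfl⟩ (mul_pos hε hpos)
  set p := ‖ux t₀ x₀‖
  obtain ⟨r, hr⟩ : ∃ r, r = d / (2 * (M + 1)) := ⟨_, rfl⟩
  have hr0 : 0 < r := by rw [hr]; positivity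
  have hrd : r * (2 * (M + 1)) = d := by rw [hr]; field_simp
  have hsub : closedBall x₀ r ⊆ closedBall x₀ (d / 2) :=
    closedBall_subset_closedBall (by nlinarith)
  have hlocal : p ≤ r * (M * (2 * p)) / (2 * ε) + D / r + G :=
    hu.norm_space_deriv_le_of_source_le hε ht₀.1 hr0 (by positivity)
      (fun s hs y _ ↦ hbd s hs.1 y) (fun y _ ↦ hinit y) fun s hs y hy ↦
        (hpde s hs.1 y).trans <| by
          gcongr
          exact hball s ⟨hs.1.le, hs.2.trans ht₀.2⟩ y (hsub hy)
  -- The choice of `r` lets the left-hand side absorb the source term.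
  have habsorb : r * (M * (2 * p)) / (2 * ε) ≤ p / 2 := by
    rw [div_le_div_iff₀ (by positivity) two_pos]
    nlinarith [mul_le_mul_of_nonneg_left (hrd.trans_le hdε) hp.le, mul_pos hr0 hp]
  have hdD : d * (D / r) = 2 * (M + 1) * D := by rw [← hrd]; field_simp
  have hscaled : ε * ‖ux t x‖ ≤ 4 * (M + 1) * D + ε * (2 * G) := by
    have hdp : d * p ≤ d * (p / 2 + D / r + G) :=
      mul_le_mul_of_nonneg_left (by linarith) hd.le
    linear_combination hle + 2 * hdp + 2 * mul_le_mul_of_nonneg_right hdε hG + 2 * hdD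
  rwa [div_add' _ _ _ hε.ne', le_div_iff₀' hε, mul_comm (2 * G)]

end HasParabolicDerivs

section Mollifier

variable {η : ℝ → ℝ} {f : ℝ → E} {D ε : ℝ}

lemma norm_deriv_integral_smul_le (hη : ContDiff ℝ 1 η) (hηc : HasCompactSupport η)
    (hf : AEStronglyMeasurable f) (hbd : ∀ᵐ y, ‖f y‖ ≤ D) (x : ℝ) :
    ‖deriv (fun x ↦ ∫ y, η (x - y) • f y) x‖ ≤ (∫ y, |deriv η y|) * D := by
  have hderiv : HasDerivAt (fun x ↦ ∫ y, η (x - y) • f y) (∫ y, deriv η (x - y) • f y) x := by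
    have hswap (h : ℝ → ℝ) : convolution h f (ContinuousLinearMap.lsmul ℝ ℝ) volume =
        fun z ↦ ∫ y, h (z - y) • f y := funext fun z ↦ convolution_eq_swap _
    have hconv := hηc.hasDerivAt_convolution_left (ContinuousLinearMap.lsmul ℝ ℝ) hη
      ((memLp_top_of_bound hf D hbd).locallyIntegrable le_top) x
    rwa [hswap, hswap] at hconv
  have hint : Integrable fun y ↦ |deriv η (x - y)| :=
    (((hη.continuous_deriv_one).integrable_of_hasCompactSupport hηc.deriv).comp_sub_left x).abs
  rw [hderiv.deriv, ← integral_sub_left_eq_self (fun y ↦ |deriv η y|) volume x,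
    ← integral_mul_const]
  refine norm_integral_le_of_norm_le (hint.mul_const D) ?_
  filter_upwards [hbd] with y hy
  rw [norm_smul, Real.norm_eq_abs]
  gcongr

lemma integral_abs_deriv_rescale (η : ℝ → ℝ) (hε : 0 < ε) :
    ∫ x, |deriv (fun x ↦ ε⁻¹ * η (x / ε)) x| = (∫ x, |deriv η x|) / ε := by
  have hderiv (x : ℝ) : |deriv (fun x ↦ ε⁻¹ * η (x / ε)) x| = ε⁻¹ * ε⁻¹ * |deriv η (x / ε)| := by
    have hscale := deriv_comp_mul_left ε⁻¹ η x
    simp only [div_eq_inv_mul, deriv_const_mul_field', hscale, abs_mul, abs_of_pos (inv_pos.2 hε),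
      smul_eq_mul, mul_assoc]
  simp only [hderiv, integral_const_mul, Measure.integral_comp_div (fun x ↦ |deriv η x|),
    abs_of_pos hε, smul_eq_mul]
  field_simp

lemma norm_deriv_mollify_le (hη : ContDiff ℝ 1 η) (hηc : HasCompactSupport η) (hε : 0 < ε)
    (hf : AEStronglyMeasurable f) (hbd : ∀ᵐ y, ‖f y‖ ≤ D) (x : ℝ) :
    ‖deriv (fun x ↦ ∫ y, (ε⁻¹ * η ((x - y) / ε)) • f y) x‖ ≤ (∫ y, |deriv η y|) / ε * D := by
  rw [← integral_abs_deriv_rescale η hε]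
  refine norm_deriv_integral_smul_le (η := fun x ↦ ε⁻¹ * η (x / ε)) (by fun_prop) ?_ hf hbd x
  have hcomp : HasCompactSupport fun x ↦ η (x / ε) := by
    simpa only [div_eq_inv_mul] using!
      hηc.comp_homeomorph (Homeomorph.mulLeft₀ ε⁻¹ (inv_ne_zero hε.ne'))
  exact hcomp.mul_left

end Mollifier

lemma contDiff_stdMollifier₁₆ {n : ℕ∞} : ContDiff ℝ n stdMollifier₁₆ := by
  have hbump : bump₁₆ = fun x ↦ expNegInvGlue (1 - x ^ 2) := by
    funext x
    simp only [bump₁₆, expNegInvGlue, ← sq_lt_one_iff_abs_lt_one, ← not_lt, ite_not, sub_pos]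
  have hglue : ContDiff ℝ n bump₁₆ := hbump ▸ expNegInvGlue.contDiff.comp (by fun_prop)
  exact hglue.div_const _

lemma hasCompactSupport_stdMollifier₁₆ : HasCompactSupport stdMollifier₁₆ := by
  refine HasCompactSupport.intro (isCompact_closedBall 0 1) fun x hx ↦ ?_
  have hx1 : ¬ |x| < 1 := fun h ↦ hx (by simpa using h.le)
  rw [stdMollifier₁₆, bump₁₆, if_neg hx1, zero_div]

theorem HasParabolicDerivs.norm_space_deriv_le_of_eq_mollify {u ut ux uxx : ℝ → ℝ → E}
    {u₀ : ℝ → E} {η : ℝ → ℝ} {ε D M : ℝ} (hu : HasParabolicDerivs u ut ux uxx) (hε : 0 < ε)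
    (hM : 0 ≤ M) (hη : ContDiff ℝ 1 η) (hηc : HasCompactSupport η)
    (hu₀ : AEStronglyMeasurable u₀) (hu₀_bd : ∀ᵐ x, ‖u₀ x‖ ≤ D) (hbd : ∀ t ≥ 0, ∀ x, ‖u t x‖ ≤ D)
    (hinit : ∀ x, u 0 x = ∫ y, (ε⁻¹ * η ((x - y) / ε)) • u₀ y)
    (hpde : ∀ t > 0, ∀ x, ‖ut t x - ε • uxx t x‖ ≤ M * ‖ux t x‖) {t x : ℝ} (ht : 0 ≤ t) :
    ‖ux t x‖ ≤ (4 * (M + 1) + 2 * ∫ y, |deriv η y|) * D / ε := by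
  have hux₀ (x : ℝ) : ‖ux 0 x‖ ≤ (∫ y, |deriv η y|) / ε * D := by
    rw [← (hu.hasDerivAt_space 0 le_rfl x).deriv, funext hinit]
    exact norm_deriv_mollify_le hη hηc hε hu₀ hu₀_bd x
  exact (hu.norm_space_deriv_le hε hM hbd hux₀ hpde ht).trans_eq (by ring)

theorem stmt16_general [ProperSpace E] (A : E → E →L[ℝ] E) (hA : Continuous A) (D : ℝ)
    (hD : 0 < D) :
    ∃ C : ℝ, 0 < C ∧ ∀ ε : ℝ, 0 < ε → ∀ (u : ℝ → ℝ → E) (u₀ : ℝ → E),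
      ContDiff ℝ 2 (uncurry u) →
      AEStronglyMeasurable u₀ → (∀ᵐ x, ‖u₀ x‖ ≤ D) →
      (∀ t x, 0 ≤ t → ‖u t x‖ ≤ D) →
      (∀ x, u 0 x = ∫ y, friedrichs₁₆ ε (x - y) • u₀ y) →
      (∀ t x, 0 < t →
        deriv (fun s ↦ u s x) t + A (u t x) (deriv (u t) x) = ε • deriv (deriv (u t)) x) →
      ∀ t x, 0 ≤ t → ‖deriv (u t) x‖ ≤ C / ε := by
  obtain ⟨M, hM⟩ := (isCompact_closedBall (0 : E) D).exists_bound_of_continuousOn hA.continuousOn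
  have hM0 : 0 ≤ M := (norm_nonneg _).trans (hM 0 (mem_closedBall_self hD.le))
  refine ⟨(4 * (M + 1) + 2 * ∫ y, |deriv stdMollifier₁₆ y|) * D, by positivity,
    fun ε hε u u₀ hu hu₀ hu₀_bd hbd hinit hpde t x ht ↦
      (HasParabolicDerivs.of_contDiff hu).norm_space_deriv_le_of_eq_mollify hε hM0
        contDiff_stdMollifier₁₆ hasCompactSupport_stdMollifier₁₆ hu₀ hu₀_bd
        (fun t ht x ↦ hbd t x ht) hinit (fun t ht x ↦ ?_) ht⟩
  rw [← hpde t x ht, sub_add_cancel_left, norm_neg]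
  exact (A (u t x)).le_of_opNorm_le (hM _ (mem_closedBall_zero_iff.2 (hbd t x ht.le))) _

end

/-- Parabolic smoothing for the viscous `2×2` system
`u_t + A(u)u_x = ε u_xx` with initial data `J_ε ∗ u₀`, `‖u₀‖_{L^∞} ≤ D`:
there is `C` depending only on `D` and `A` with
`‖u_x(t,·)‖_{L^∞} ≤ C ε⁻¹` for all `t ≥ 0`. -/
theorem stmt16
    (A : (Fin 2 → ℝ) → Matrix (Fin 2) (Fin 2) ℝ)
    (hA : ∀ i j, ContDiff ℝ (⊤ : ℕ∞) (fun w => A w i j))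
    (D : ℝ) (hD : 0 < D) :
    ∃ C : ℝ, 0 < C ∧
      ∀ (ε : ℝ), 0 < ε →
      ∀ (u : ℝ → ℝ → (Fin 2 → ℝ)) (u₀ : ℝ → (Fin 2 → ℝ)),
        ContDiff ℝ (⊤ : ℕ∞) (Function.uncurry u) →
        Measurable u₀ → (∀ x, ‖u₀ x‖ ≤ D) →
        (∀ t x, 0 ≤ t → ‖u t x‖ ≤ D) →
        (∀ x, u 0 x = ∫ y, friedrichs₁₆ ε (x - y) • u₀ y) →
        (∀ t x, 0 ≤ t →
          deriv (fun s => u s x) t + A (u t x) *ᵥ deriv (fun y => u t y) x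
            = ε • deriv (deriv (u t)) x) →
        ∀ t x, 0 ≤ t → ‖deriv (fun y => u t y) x‖ ≤ C / ε := by
  have hA_cont : Continuous A := continuous_matrix fun i j ↦ (hA i j).continuous
  obtain ⟨C, hC, h⟩ := stmt16_general (fun w ↦ (toLin' (A w)).toContinuousLinearMap)
    (continuous_clm_apply.2 fun _ ↦ hA_cont.matrix_mulVec continuous_const) D hD
  exact ⟨C, hC, fun ε hε u u₀ hu hu₀ hu₀_bd hbd hinit hpde ↦
    h ε hε u u₀ (hu.of_le (by norm_cast)) hu₀.aestronglyMeasurable (.of_forall hu₀_bd) hbd hinit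
      fun t x ht ↦ hpde t x ht.le⟩
end
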